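/- Let u, v, w be three vertices such that v and w are consecutive vertices along a canonical path of u in a negative cone of u. Then the triangle uvw contains no vertex of P in its interior and no constraint intersects its interior. -/

import Mathlib

/-!
The points of `P` involved are `u` and two vertices `v`, `w` in a negative cone of `u`, each adding
its edge towards `u`. Everything is affine, so the cone is described by two linear functionals `A`,
`B` (`InCone`), heights are measured by `A + B`, and points of the triangle `uvw` are handled
through barycentric coordinates (`bary`).

The tool is gift wrapping, `exists_visible`: if constraints can enter a triangle `vry` only through
the side `vy`, then the vertex `z` of the triangle seen from `v` under the smallest angle with `vr`
is visible from `v`, and no constraint at `v` separates it from `r`. If `r` lies on the edge `vu`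
and `y` is in the cone of `v` and lower than `u`, then `z` is a better candidate than `u`, which
contradicts that `v` adds the edge `vu` (`ConeEdge.no_triangle`). Two consequences follow.

* With `r = u` and `y = w`: neither of `v`, `w` is in the cone of the other
  (`ConeEdge.not_inCone`). Hence moving up in the cone means moving away from the line `vw`
  (`InCone.bary_lt`).
* With `r` a crossing point: a visibility segment `xy` that rises in the cone of `x` to a vertex `y`
  lower than `u` does not cross the edges `vu` and `wu` (`ConeEdge.no_cross`).

Suppose now that the triangle `uvw` contains a vertex besides its corners, and let `x` be one
farthest from the line `vw`. A constraint crossing `xu` cannot leave the triangle through the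
visible sides `uv`, `uw`, so it would have an endpoint in the triangle farther away than `x`; hence
`x` sees `u`. A visible vertex `y` in the cone of `x` and below `u` is farther from `vw` than `x`,
hence outside the triangle, and then `xy` crosses `vu` or `wu`, which is impossible. So `x` adds an
edge to `u` strictly between `v` and `w`, against their being consecutive (`triangle_vertex`).
Finally, the end away from `vw` of a constraint through the interior must be a vertex of the
triangle, hence `u`; but then the constraint separates `v` from `w` at `u` (`triangle_constr`).
-/

open Real Set

noncomputable section

namespace CHT6

/-- Points in the plane. -/
abbrev Pt := ℝ × ℝ

/-- Euclidean distance. -/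
def dst (p q : Pt) : ℝ := Real.sqrt ((p.1 - q.1) ^ 2 + (p.2 - q.2) ^ 2)

/-- Unsigned angle at `q` between segments `qp` and `qr`. -/
def ang (p q r : Pt) : ℝ :=
  Real.arccos (((p.1 - q.1) * (r.1 - q.1) + (p.2 - q.2) * (r.2 - q.2)) / (dst p q * dst r q))

/-- 2D cross product. -/
def crossP (a b : Pt) : ℝ := a.1 * b.2 - a.2 * b.1

/-- The segments `ab` and `cd` properly cross: their relative interiors meet. -/
def PCross (a b c d : Pt) : Prop := (openSegment ℝ a b ∩ openSegment ℝ c d).Nonempty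

/-- `uz` is a constraint of `S`. -/
def Constr (S : Set (Pt × Pt)) (u z : Pt) : Prop := (u, z) ∈ S ∨ (z, u) ∈ S

/-- `u` and `v` see each other: `uv` is a constraint or no constraint properly crosses it. -/
def CanSee (S : Set (Pt × Pt)) (u v : Pt) : Prop :=
  Constr S u v ∨ ∀ c ∈ S, ¬ PCross c.1 c.2 u v

/-- Rotation of the plane by angle `θ` about the origin. -/
def rot (θ : ℝ) (p : Pt) : Pt :=
  (Real.cos θ * p.1 - Real.sin θ * p.2, Real.sin θ * p.1 + Real.cos θ * p.2)

/-- `p` relative to `u`, rotated so that the positive cone `Cᵢ` becomes the upward cone. -/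
def rel (i : ℕ) (u p : Pt) : Pt := rot (-(2 * Real.pi * i / 3)) (p - u)

/-- `p` lies in the (open) positive cone `Cᵢ` of `u` (width π/3; `C₀` is upward vertical). -/
def inPos (i : ℕ) (u p : Pt) : Prop := Real.sqrt 3 * |(rel i u p).1| < (rel i u p).2

/-- `p` lies in the negative cone `C̄ᵢ` of `u`. -/
def inNeg (i : ℕ) (u p : Pt) : Prop := inPos i p u

/-- Length of the projection of `p` onto the bisector of the positive cone `Cᵢ` of `u`. -/
def projLen (i : ℕ) (u p : Pt) : ℝ := (rel i u p).2

/-- Projected distance of `p` from `u` for the negative cone `C̄ᵢ` of `u`. -/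
def negProj (i : ℕ) (u p : Pt) : ℝ := projLen i p u

/-- `p` and `q` are not strictly separated, within the cone `cone` at `u`, by a constraint
incident to `u`: they lie in a common (closed) subcone. -/
def SameSubIn (cone : Pt → Pt → Prop) (S : Set (Pt × Pt)) (u p q : Pt) : Prop :=
  ∀ z, Constr S u z → cone u z →
    ¬ (crossP (z - u) (p - u) * crossP (z - u) (q - u) < 0)

def SameSubPos (S : Set (Pt × Pt)) (i : ℕ) (u p q : Pt) : Prop := SameSubIn (inPos i) S u p q

def SameSubNeg (S : Set (Pt × Pt)) (i : ℕ) (u p q : Pt) : Prop := SameSubIn (inNeg i) S u p q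

/-- General position: no two points of `P` define a line parallel to one of the six cone rays
(slopes `0`, `√3`, `-√3`), and no three points of `P` are collinear. -/
def GenPos (P : Set Pt) : Prop :=
  (∀ p ∈ P, ∀ q ∈ P, p ≠ q →
    p.2 ≠ q.2 ∧ q.2 - p.2 ≠ Real.sqrt 3 * (q.1 - p.1) ∧
      q.2 - p.2 ≠ -(Real.sqrt 3 * (q.1 - p.1))) ∧
  (∀ p ∈ P, ∀ q ∈ P, ∀ r ∈ P, p ≠ q → q ≠ r → p ≠ r → ¬ Collinear ℝ ({p, q, r} : Set Pt))

/-- `v` is, among the vertices visible from `u` in the positive subcone of `u` containing `v`,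
the one minimizing the projection onto the cone bisector: `u` adds the edge `uv`. -/
def EdgeDir (P : Set Pt) (S : Set (Pt × Pt)) (u v : Pt) : Prop :=
  u ∈ P ∧ v ∈ P ∧ ∃ i < 3, inPos i u v ∧ CanSee S u v ∧
    ∀ w ∈ P, w ≠ u → inPos i u w → CanSee S u w → SameSubPos S i u v w →
      projLen i u v ≤ projLen i u w

/-- Edges of the constrained half-θ₆-graph. -/
def HEdge (P : Set Pt) (S : Set (Pt × Pt)) (u v : Pt) : Prop :=
  EdgeDir P S u v ∨ EdgeDir P S v u

/-- `f` is a path in the graph with edge relation `E`. -/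
def IsPath (E : Pt → Pt → Prop) {n : ℕ} (f : Fin (n + 1) → Pt) : Prop :=
  ∀ j : Fin n, E (f j.castSucc) (f j.succ)

/-- Euclidean length of a polygonal path. -/
def pathLen {n : ℕ} (f : Fin (n + 1) → Pt) : ℝ :=
  ∑ j : Fin n, dst (f j.castSucc) (f j.succ)

/-- `x` is a vertex of the canonical sequence of `u` in the negative cone `C̄ᵘᵢ`. -/
def CanonVert (P : Set Pt) (S : Set (Pt × Pt)) (i : ℕ) (u x : Pt) : Prop :=
  x ∈ P ∧ HEdge P S u x ∧ inNeg i u x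

/-- `v` and `w` are consecutive (in counterclockwise order) vertices of the canonical path of
`u` in a subcone of the negative cone `C̄ᵘᵢ`. -/
def ConsecCanon (P : Set Pt) (S : Set (Pt × Pt)) (i : ℕ) (u v w : Pt) : Prop :=
  CanonVert P S i u v ∧ CanonVert P S i u w ∧ SameSubNeg S i u v w ∧
  crossP (v - u) (w - u) > 0 ∧
  ∀ x ∈ P, CanonVert P S i u x → SameSubNeg S i u v x →
    ¬ (crossP (v - u) (x - u) > 0 ∧ crossP (x - u) (w - u) > 0)

/-- `x` is a closest canonical vertex of `u` in (a subcone of) the negative cone `C̄ᵘᵢ`,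
distances being measured by projection onto the cone bisector. -/
def ClosestCanon (P : Set Pt) (S : Set (Pt × Pt)) (i : ℕ) (u x : Pt) : Prop :=
  CanonVert P S i u x ∧
  ∀ y ∈ P, CanonVert P S i u y → SameSubNeg S i u x y → negProj i u x ≤ negProj i u y

/-- Edges of the bounded-degree graph `G₉`: canonical-path edges together with, for each
negative subcone, the edge to the closest canonical vertex. -/
def G9Edge (P : Set Pt) (S : Set (Pt × Pt)) (a b : Pt) : Prop :=
  (∃ u ∈ P, ∃ i < 3, ConsecCanon P S i u a b ∨ ConsecCanon P S i u b a) ∨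
  (∃ i < 3, ClosestCanon P S i a b ∨ ClosestCanon P S i b a)

/-- Coordinate of `p` along the right boundary direction `(1/2, √3/2)` of the upward cone. -/
def coordA (p : Pt) : ℝ := p.1 + p.2 / Real.sqrt 3

/-- Coordinate of `p` along the left boundary direction `(-1/2, √3/2)` of the upward cone. -/
def coordB (p : Pt) : ℝ := -p.1 + p.2 / Real.sqrt 3

end CHT6

namespace CHT6

/-! ### Barycentric coordinates -/

/-- The barycentric coordinate of `p` belonging to the vertex `a` of the triangle `abc`
(it is identically `0` when the triangle is degenerate). -/
def bary (a b c p : Pt) : ℝ := crossP (b - p) (c - p) / crossP (b - a) (c - a)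

lemma bary_swap (a b c p : Pt) : bary a b c p = bary a c b p := by
  unfold bary crossP
  rw [← neg_div_neg_eq]
  congr 1 <;> ring

lemma crossP_cyc (a b c : Pt) : crossP (c - b) (a - b) = crossP (b - a) (c - a) := by
  simp only [crossP, Prod.fst_sub, Prod.snd_sub]; ring

lemma bary_sum {a b c : Pt} (hD : crossP (b - a) (c - a) ≠ 0) (p : Pt) :
    bary a b c p + bary b c a p + bary c a b p = 1 := by
  have h1 := crossP_cyc a b c
  have h2 := crossP_cyc b c a
  unfold bary
  rw [h2, h1, ← add_div, ← add_div, div_eq_one_iff_eq hD]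
  simp only [crossP, Prod.fst_sub, Prod.snd_sub]; ring

lemma bary_eq {a b c : Pt} (hD : crossP (b - a) (c - a) ≠ 0) (p : Pt) :
    p = bary a b c p • a + bary b c a p • b + bary c a b p • c := by
  have h1 := crossP_cyc a b c
  have h2 := crossP_cyc b c a
  unfold bary
  rw [h2, h1]
  ext
  · simp only [Prod.fst_add, Prod.smul_fst, smul_eq_mul]
    field_simp
    simp only [crossP, Prod.fst_sub, Prod.snd_sub]; ring
  · simp only [Prod.snd_add, Prod.smul_snd, smul_eq_mul]
    field_simp
    simp only [crossP, Prod.fst_sub, Prod.snd_sub]; ring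

lemma bary_comb (a b c p q : Pt) {s t : ℝ} (h : s + t = 1) :
    bary a b c (s • p + t • q) = s * bary a b c p + t * bary a b c q := by
  obtain rfl : t = 1 - s := by linarith
  unfold bary
  rw [mul_div_assoc', mul_div_assoc', ← add_div]
  congr 1
  simp only [crossP, Prod.fst_sub, Prod.snd_sub, Prod.fst_add, Prod.snd_add, Prod.smul_fst,
    Prod.smul_snd, smul_eq_mul]
  ring

lemma bary_self {a b c : Pt} (hD : crossP (b - a) (c - a) ≠ 0) : bary a b c a = 1 :=
  div_self hD

lemma bary_left (a b c : Pt) : bary a b c b = 0 := by simp [bary, crossP]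

lemma bary_right (a b c : Pt) : bary a b c c = 0 := by simp [bary, crossP]

lemma bary_lin {a b c : Pt} (hD : crossP (b - a) (c - a) ≠ 0) (L : Pt →ₗ[ℝ] ℝ) (p : Pt) :
    L p = bary a b c p * L a + bary b c a p * L b + bary c a b p * L c := by
  conv_lhs => rw [bary_eq hD p]
  simp

/-- In barycentric coordinates with `a` as origin. -/
lemma bary_sub {a b c : Pt} (hD : crossP (b - a) (c - a) ≠ 0) (p : Pt) :
    p - a = bary b c a p • (b - a) + bary c a b p • (c - a) := by
  have hs := bary_sum hD p
  conv_lhs => rw [bary_eq hD p]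
  obtain h : bary a b c p = 1 - bary b c a p - bary c a b p := by linarith
  rw [h]; module

/-! ### General position and visibility -/

lemma GenPos.cross_ne {P : Set Pt} (hGP : GenPos P) {p q r : Pt} (hp : p ∈ P) (hq : q ∈ P)
    (hr : r ∈ P) (hpq : p ≠ q) (hqr : q ≠ r) (hpr : p ≠ r) : crossP (q - p) (r - p) ≠ 0 := by
  intro h
  refine hGP.2 p hp q hq r hr hpq hqr hpr ?_
  rw [collinear_iff_of_mem (p₀ := p) (by simp)]
  refine ⟨q - p, ?_⟩
  have hk : ∃ k : ℝ, r = k • (q - p) + p := by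
    simp only [crossP, Prod.fst_sub, Prod.snd_sub] at h
    by_cases h1 : q.1 - p.1 = 0
    · have h2 : q.2 - p.2 ≠ 0 := fun h2 => hpq (Prod.ext (by linarith) (by linarith))
      refine ⟨(r.2 - p.2) / (q.2 - p.2), Prod.ext ?_ ?_⟩
      · have : r.1 - p.1 = 0 := by
          rw [h1] at h
          rcases mul_eq_zero.1 (show (q.2 - p.2) * (r.1 - p.1) = 0 by linarith) with h | h
          · exact absurd h h2
          · exact h
        simp [h1]; linarith
      · simp; field_simp; ring
    · refine ⟨(r.1 - p.1) / (q.1 - p.1), Prod.ext ?_ ?_⟩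
      · simp; field_simp; ring
      · simp; field_simp; linarith
  obtain ⟨k, hk⟩ := hk
  intro z hz
  rcases hz with rfl | rfl | rfl
  · exact ⟨0, by simp⟩
  · exact ⟨1, by simp⟩
  · exact ⟨k, by simpa using hk⟩

lemma GenPos.bary_ne {P : Set Pt} (hGP : GenPos P) {a b c p : Pt}
    (hD : crossP (b - a) (c - a) ≠ 0) (hp : p ∈ P) (hb : b ∈ P)
    (hc : c ∈ P) (hpb : p ≠ b) (hpc : p ≠ c) : bary a b c p ≠ 0 := by
  have hbc : b ≠ c := by
    rintro rfl; exact hD (by simp only [crossP]; ring)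
  exact div_ne_zero (hGP.cross_ne hp hb hc hpb hbc hpc) hD

/-- A vertex in the relative interior of a segment between vertices forces the segment to be
a single point. -/
lemma GenPos.eq_of_mem {P : Set Pt} (hGP : GenPos P) {p e f : Pt} (hp : p ∈ P) (he : e ∈ P)
    (hf : f ∈ P) (h : p ∈ openSegment ℝ e f) : e = f := by
  by_contra hne
  obtain ⟨s, t, hs, ht, hst, rfl⟩ := h
  obtain rfl : t = 1 - s := by linarith
  have h1 : s • e + (1 - s) • f ≠ e := by
    intro h
    apply hne
    have : (1 - s) • (e - f) = 0 := by
      rw [← sub_eq_zero] at h; rw [← neg_eq_zero, ← h]; module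
    rcases smul_eq_zero.1 this with h | h
    · linarith
    · exact sub_eq_zero.1 h
  have h2 : s • e + (1 - s) • f ≠ f := by
    intro h
    apply hne
    have : s • (e - f) = 0 := by
      rw [← sub_eq_zero] at h; rw [← h]; module
    rcases smul_eq_zero.1 this with h | h
    · linarith
    · exact sub_eq_zero.1 h
  refine hGP.cross_ne hp he hf h1 hne h2 ?_
  simp only [crossP, Prod.fst_sub, Prod.snd_sub, Prod.fst_add, Prod.snd_add, Prod.smul_fst,
    Prod.smul_snd, smul_eq_mul]
  ring

lemma Constr.symm {S : Set (Pt × Pt)} {e f : Pt} (h : Constr S e f) : Constr S f e := Or.symm h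

lemma Constr.mem {P : Set Pt} {S : Set (Pt × Pt)} (hSP : ∀ c ∈ S, c.1 ∈ P ∧ c.2 ∈ P)
    {e f : Pt} (h : Constr S e f) : e ∈ P ∧ f ∈ P := by
  rcases h with h | h
  · exact hSP _ h
  · exact (hSP _ h).symm

lemma CanSee.symm {S : Set (Pt × Pt)} {a b : Pt} (h : CanSee S a b) : CanSee S b a := by
  rcases h with h | h
  · exact Or.inl h.symm
  · refine Or.inr fun c hc => ?_
    have := h c hc
    unfold PCross at *
    rwa [openSegment_symm ℝ b a]

/-- The only constraint that can meet the relative interior of a visibility segment is that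
segment itself. -/
lemma CanSee.eq_of_cross {S : Set (Pt × Pt)}
    (hSnc : ∀ c ∈ S, ∀ d ∈ S, c ≠ d → ¬ PCross c.1 c.2 d.1 d.2)
    {a b e f m : Pt} (hab : CanSee S a b) (hef : Constr S e f)
    (hm : m ∈ openSegment ℝ e f) (hm' : m ∈ openSegment ℝ a b) :
    (e = a ∧ f = b) ∨ (e = b ∧ f = a) := by
  rcases hab with hab | hab
  · have hm2 := hm
    have hm2' := hm'
    rw [openSegment_symm] at hm2 hm2'
    rcases hef with hef | hef <;> rcases hab with hab | hab
    · have h := mt (hSnc _ hef _ hab) (not_not.2 ⟨m, hm, hm'⟩)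
      simp only [ne_eq, not_not, Prod.mk.injEq] at h; tauto
    · have h := mt (hSnc _ hef _ hab) (not_not.2 ⟨m, hm, hm2'⟩)
      simp only [ne_eq, not_not, Prod.mk.injEq] at h; tauto
    · have h := mt (hSnc _ hef _ hab) (not_not.2 ⟨m, hm2, hm'⟩)
      simp only [ne_eq, not_not, Prod.mk.injEq] at h; tauto
    · have h := mt (hSnc _ hef _ hab) (not_not.2 ⟨m, hm2, hm2'⟩)
      simp only [ne_eq, not_not, Prod.mk.injEq] at h; tauto
  · rcases hef with hef | hef
    · exact absurd ⟨m, hm, hm'⟩ (hab _ hef)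
    · rw [openSegment_symm] at hm
      exact absurd ⟨m, hm, hm'⟩ (hab _ hef)

lemma CanSee.of_forall {S : Set (Pt × Pt)} {a b : Pt}
    (h : ∀ e f, Constr S e f → ∀ m, m ∈ openSegment ℝ e f → m ∈ openSegment ℝ a b →
      Constr S a b) : CanSee S a b := by
  by_cases hc : Constr S a b
  · exact Or.inl hc
  · refine Or.inr fun c hcS hx => ?_
    obtain ⟨m, hm, hm'⟩ := hx
    exact hc (h c.1 c.2 (Or.inl hcS) m hm hm')

lemma openSegment_sub_left {e f m n : Pt} (hm : m ∈ openSegment ℝ e f)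
    (hn : n ∈ openSegment ℝ m e) : n ∈ openSegment ℝ e f := by
  obtain ⟨s, t, hs, ht, hst, rfl⟩ := hm
  obtain ⟨s', t', hs', ht', hst', rfl⟩ := hn
  refine ⟨s' * s + t', s' * t, by positivity, by positivity, ?_, by module⟩
  linear_combination s' * hst + hst'

/-- Two affine functions that are positive at one end of a segment, not both nonnegative at the
other: at the first zero of either one, the other is still nonnegative. -/
lemma exists_first_zero {x y x' y' : ℝ} (hx : 0 < x) (hy : 0 < y) (h : x' < 0 ∨ y' < 0) :
    ∃ s t : ℝ, 0 < s ∧ 0 < t ∧ s + t = 1 ∧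
      ((s * x + t * x' = 0 ∧ 0 ≤ s * y + t * y') ∨ (s * y + t * y' = 0 ∧ 0 ≤ s * x + t * x')) := by
  have key : ∀ {x y x' y' : ℝ}, 0 < x → 0 < y → x' < 0 → x' * y ≤ x * y' →
      ∃ s t : ℝ, 0 < s ∧ 0 < t ∧ s + t = 1 ∧ (s * x + t * x' = 0 ∧ 0 ≤ s * y + t * y') := by
    intro x y x' y' hx hy hx' hc
    have hd : 0 < x - x' := by linarith
    refine ⟨-x' / (x - x'), x / (x - x'), div_pos (by linarith) hd, div_pos hx hd, ?_, ?_, ?_⟩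
    · field_simp; ring
    · field_simp; ring
    · have : -x' / (x - x') * y + x / (x - x') * y' = (x * y' - x' * y) / (x - x') := by
        field_simp; ring
      rw [this]; exact div_nonneg (by linarith) hd.le
  have hcase : (x' < 0 ∧ x' * y ≤ x * y') ∨ (y' < 0 ∧ y' * x ≤ y * x') := by
    rcases le_total (x' * y) (x * y') with hc | hc
    · rcases h with h | h
      · exact Or.inl ⟨h, hc⟩
      · exact Or.inl ⟨by nlinarith, hc⟩
    · rcases h with h | h
      · exact Or.inr ⟨by nlinarith, by linarith⟩
      · exact Or.inr ⟨h, by linarith⟩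
  rcases hcase with ⟨h1, h2⟩ | ⟨h1, h2⟩
  · obtain ⟨s, t, hs, ht, hst, h⟩ := key hx hy h1 h2
    exact ⟨s, t, hs, ht, hst, Or.inl h⟩
  · obtain ⟨s, t, hs, ht, hst, h⟩ := key hy hx h1 h2
    exact ⟨s, t, hs, ht, hst, Or.inr h⟩

/-! ### Extremal visible vertices -/

/-- Let `z` be the vertex of the triangle `vry` (off the line `vr`) seen from `v` under the
smallest angle with `vr`. If constraints can enter the triangle only through `vy`, then `v` sees
`z` and no constraint at `v` points strictly between `r` and `z`.

Barycentric coordinates belong to `v`, `r`, `y` in this order. The first hypothesis says that the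
half-open side `(v, r]` is crossed only by constraints along it, the second says the same for the
open side `ry`. The apex `r` need not be a vertex; if it is, no constraint at `r` may enter the
triangle, and there must be no further vertex on the side `vr`. -/
lemma exists_visible {P : Set Pt} {S : Set (Pt × Pt)} (hPfin : P.Finite)
    (hSP : ∀ c ∈ S, c.1 ∈ P ∧ c.2 ∈ P) (hGP : GenPos P) {v r y : Pt} (hv : v ∈ P) (hy : y ∈ P)
    (hD : crossP (r - v) (y - v) ≠ 0)
    (h1 : ∀ e f, Constr S e f → ∀ m ∈ openSegment ℝ e f, 0 ≤ bary v r y m → bary y v r m = 0 →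
      0 < bary r y v m → bary y v r e = 0)
    (h2 : ∀ e f, Constr S e f → ∀ m ∈ openSegment ℝ e f, bary v r y m = 0 → 0 < bary y v r m →
      0 < bary r y v m → bary v r y e = 0)
    (h3 : ∀ f, Constr S r f → ∀ m ∈ openSegment ℝ r f, 0 < bary v r y m → 0 < bary y v r m →
      0 ≤ bary r y v m → False)
    (h4 : ∀ p ∈ P, 0 ≤ bary v r y p → bary y v r p = 0 → 0 < bary r y v p → p = r) :
    ∃ z ∈ P, 0 ≤ bary v r y z ∧ 0 ≤ bary r y v z ∧ 0 < bary y v r z ∧ CanSee S v z ∧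
      ∀ k, Constr S v k → ∀ p q : ℝ, 0 < p → 0 < q → k - v = p • (r - v) + q • (z - v) →
        False := by
  set α := bary v r y with hα
  set β := bary r y v with hβ
  set γ := bary y v r with hγ
  have hD2 : crossP (y - r) (v - r) ≠ 0 := by rw [crossP_cyc]; exact hD
  have hD3 : crossP (v - y) (r - y) ≠ 0 := by rw [crossP_cyc]; exact hD2
  have hsum : ∀ p, α p + β p + γ p = 1 := bary_sum hD
  have hαc : ∀ p q : Pt, ∀ s t : ℝ, s + t = 1 → α (s • p + t • q) = s * α p + t * α q :=
    fun p q s t h => bary_comb v r y p q h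
  have hβc : ∀ p q : Pt, ∀ s t : ℝ, s + t = 1 → β (s • p + t • q) = s * β p + t * β q :=
    fun p q s t h => bary_comb r y v p q h
  have hγc : ∀ p q : Pt, ∀ s t : ℝ, s + t = 1 → γ (s • p + t • q) = s * γ p + t * γ q :=
    fun p q s t h => bary_comb y v r p q h
  have hαv : α v = 1 := bary_self hD
  have hβv : β v = 0 := bary_right _ _ _
  have hγv : γ v = 0 := bary_left _ _ _
  have hαy : α y = 0 := bary_right _ _ _
  have hβy : β y = 0 := bary_left _ _ _
  have hγy : γ y = 1 := bary_self hD3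
  have hfin : {p | p ∈ P ∧ 0 ≤ α p ∧ 0 ≤ β p ∧ 0 < γ p}.Finite := hPfin.subset fun p hp => hp.1
  obtain ⟨z, ⟨hzP, hzα, hzβ, hzγ⟩, hzmax⟩ := Set.exists_max_image _ (fun p => β p / γ p) hfin
    ⟨y, hy, hαy.ge, hβy.ge, by rw [hγy]; norm_num⟩
  -- vertices of the triangle strictly on the `r`-side of the line `vz` lie on the line `vr`
  have hside : ∀ p ∈ P, 0 ≤ α p → 0 ≤ β p → 0 < γ p → β p * γ z ≤ γ p * β z := by
    intro p hp hpα hpβ hpγ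
    have : β p / γ p ≤ β z / γ z := hzmax p ⟨hp, hpα, hpβ, hpγ⟩
    rw [div_le_div_iff₀ hpγ hzγ] at this
    linarith
  have hvz : v ≠ z := by rintro rfl; rw [hγv] at hzγ; exact lt_irrefl _ hzγ
  refine ⟨z, hzP, hzα, hzβ, hzγ, ?_, ?_⟩
  · -- an endpoint of a constraint crossing `vz` cannot be strictly on the `r`-side of `vz`
    have hno : ∀ e f, Constr S e f → ∀ m ∈ openSegment ℝ e f, m ∈ openSegment ℝ v z →
        β e * γ z ≤ γ e * β z := by
      intro e f hef m hm hmv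
      by_contra! hg
      have heP := (Constr.mem hSP hef).1
      have hmm := hm
      obtain ⟨s, t, hs, ht, hst, hmdef⟩ := hmv
      have hmα : 0 < α m := by
        rw [← hmdef, hαc _ _ _ _ hst, hαv]; nlinarith
      have hmβ : β m = t * β z := by rw [← hmdef, hβc _ _ _ _ hst, hβv]; ring
      have hmγ : γ m = t * γ z := by rw [← hmdef, hγc _ _ _ _ hst, hγv]; ring
      have hmγ0 : 0 < γ m := by rw [hmγ]; positivity
      have hmβ0 : 0 ≤ β m := by rw [hmβ]; positivity
      by_cases hin : 0 ≤ α e ∧ 0 ≤ γ e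
      · obtain ⟨hαe, hγe⟩ := hin
        have hβe : 0 < β e := by
          have : 0 ≤ γ e * β z := by positivity
          by_contra! hc
          nlinarith
        rcases hγe.eq_or_lt with h0 | h0
        · have := h4 e heP hαe h0.symm hβe
          subst this
          exact h3 f hef m hmm hmα hmγ0 hmβ0
        · linarith [hside e heP hαe hβe.le h0]
      · have hin' : α e < 0 ∨ γ e < 0 := by
          by_contra! hc; exact hin hc
        obtain ⟨s', t', hs', ht', hst', hcase⟩ := exists_first_zero hmα hmγ0 hin'
        have hn : s' • m + t' • e ∈ openSegment ℝ m e := ⟨s', t', hs', ht', hst', rfl⟩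
        have hn2 := openSegment_sub_left hm hn
        rw [← hαc _ _ _ _ hst', ← hγc _ _ _ _ hst'] at hcase
        have hgn : γ (s' • m + t' • e) * β z < β (s' • m + t' • e) * γ z := by
          rw [hγc _ _ _ _ hst', hβc _ _ _ _ hst', hmβ, hmγ]; nlinarith
        generalize s' • m + t' • e = n at hn hn2 hcase hgn
        have hβn : 0 ≤ γ n → 0 < β n := by
          intro h
          have : 0 ≤ γ n * β z := by positivity
          by_contra! hc
          nlinarith
        have hmm2 := hm
        obtain ⟨s'', t'', hs'', ht'', hst'', hmdef2⟩ := hm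
        have hend : ∀ a b : ℝ, a = 0 → b = 0 → s'' * a + t'' * b = 0 := by
          intro a b ha hb; simp [ha, hb]
        rw [openSegment_symm] at hn2
        have hn3 := hn2
        rw [openSegment_symm] at hn3
        have c1 : ¬ (γ n = 0 ∧ 0 ≤ α n) := by
          rintro ⟨ha, hb⟩
          have hβ' := hβn ha.ge
          have q1 := h1 e f hef n hn3 hb ha hβ'
          have q2 := h1 f e hef.symm n hn2 hb ha hβ'
          have : γ m = 0 := by rw [← hmdef2, hγc _ _ _ _ hst'']; exact hend _ _ q1 q2
          linarith
        rcases hcase with ⟨ha, hb⟩ | h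
        · rcases hb.eq_or_lt with h0 | h0
          · exact c1 ⟨h0.symm, ha.ge⟩
          · have hβ' := hβn hb
            have q1 := h2 e f hef n hn3 ha h0 hβ'
            have q2 := h2 f e hef.symm n hn2 ha h0 hβ'
            have : α m = 0 := by rw [← hmdef2, hαc _ _ _ _ hst'']; exact hend _ _ q1 q2
            linarith
        · exact c1 h
    refine CanSee.of_forall fun e f hef m hm hmv => ?_
    have he := hno e f hef m hm hmv
    have hf := hno f e hef.symm m (by rwa [openSegment_symm]) hmv
    have hne : e ≠ f := by
      rintro rfl
      rw [openSegment_same] at hm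
      obtain rfl : m = e := hm
      exact hvz (hGP.eq_of_mem (Constr.mem hSP hef).1 hv hzP hmv)
    obtain ⟨s, t, hs, ht, hst, hmdef⟩ := hmv
    obtain ⟨s'', t'', hs'', ht'', hst'', hmdef2⟩ := hm
    have hmβ : s'' * β e + t'' * β f = t * β z := by
      rw [← hβc _ _ _ _ hst'', hmdef2, ← hmdef, hβc _ _ _ _ hst, hβv]; ring
    have hmγ : s'' * γ e + t'' * γ f = t * γ z := by
      rw [← hγc _ _ _ _ hst'', hmdef2, ← hmdef, hγc _ _ _ _ hst, hγv]; ring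
    -- both ends of the constraint lie on the line `vz`, so the constraint is `vz`
    have hsumg : s'' * (γ e * β z - β e * γ z) + t'' * (γ f * β z - β f * γ z) = 0 := by
      linear_combination β z * hmγ - γ z * hmβ
    have he0 : γ e * β z - β e * γ z = 0 := by nlinarith
    have hf0 : γ f * β z - β f * γ z = 0 := by nlinarith
    have hline : ∀ p ∈ P, γ p * β z - β p * γ z = 0 → p = v ∨ p = z := by
      intro p hp h0
      by_contra! hc
      refine hGP.cross_ne hv hp hzP hc.1.symm hc.2 hvz ?_
      rw [bary_sub hD p, bary_sub hD z]
      change crossP (β p • (r - v) + γ p • (y - v)) (β z • (r - v) + γ z • (y - v)) = 0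
      have : crossP (β p • (r - v) + γ p • (y - v)) (β z • (r - v) + γ z • (y - v))
          = -(γ p * β z - β p * γ z) * crossP (r - v) (y - v) := by
        simp only [crossP, Prod.fst_add, Prod.snd_add, Prod.smul_fst, Prod.smul_snd, smul_eq_mul]
        ring
      rw [this, h0]; ring
    rcases hline e (Constr.mem hSP hef).1 he0 with rfl | rfl <;>
      rcases hline f (Constr.mem hSP hef).2 hf0 with rfl | rfl
    · exact absurd rfl hne
    · exact hef
    · exact hef.symm
    · exact absurd rfl hne
  · intro k hk p q hp hq hkv
    have hkP := (Constr.mem hSP hk).2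
    have hk' : k = (1 - p - q) • v + p • r + q • z := by
      rw [← sub_eq_zero] at hkv ⊢; rw [← hkv]; module
    have hkβ : β k = p + q * β z := by
      have e1 : β k * crossP (y - r) (v - r) = crossP (y - k) (v - k) := div_mul_cancel₀ _ hD2
      have e2 : β z * crossP (y - r) (v - r) = crossP (y - z) (v - z) := div_mul_cancel₀ _ hD2
      refine mul_right_cancel₀ hD2 ?_
      rw [e1, add_mul, mul_assoc, e2, hk']
      simp only [crossP, Prod.fst_add, Prod.snd_add, Prod.smul_fst, Prod.smul_snd, smul_eq_mul,
        Prod.fst_sub, Prod.snd_sub]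
      ring
    have hkγ : γ k = q * γ z := by
      have e1 : γ k * crossP (v - y) (r - y) = crossP (v - k) (r - k) := div_mul_cancel₀ _ hD3
      have e2 : γ z * crossP (v - y) (r - y) = crossP (v - z) (r - z) := div_mul_cancel₀ _ hD3
      refine mul_right_cancel₀ hD3 ?_
      rw [e1, mul_assoc, e2, hk']
      simp only [crossP, Prod.fst_add, Prod.snd_add, Prod.smul_fst, Prod.smul_snd, smul_eq_mul,
        Prod.fst_sub, Prod.snd_sub]
      ring
    have hγk : 0 < γ k := by rw [hkγ]; positivity
    have hβk : 0 < β k := by rw [hkβ]; positivity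
    have hαk : α k < 0 := by
      by_contra! hc
      have := hside k hkP hc hβk.le hγk
      rw [hkβ, hkγ] at this
      nlinarith [mul_pos hp hzγ]
    -- the constraint `vk` leaves the triangle through the open side `ry`
    have hd : 0 < 1 - α k := by linarith
    have hst : -α k / (1 - α k) + 1 / (1 - α k) = 1 := by field_simp; ring
    have hn : (-α k / (1 - α k)) • v + (1 / (1 - α k)) • k ∈ openSegment ℝ v k :=
      ⟨_, _, div_pos (by linarith) hd, by positivity, hst, rfl⟩
    have := h2 v k hk _ hn
      (by rw [hαc _ _ _ _ hst, hαv]; field_simp; ring)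
      (by rw [hγc _ _ _ _ hst, hγv]; simp only [mul_zero, zero_add]; positivity)
      (by rw [hβc _ _ _ _ hst, hβv]; simp only [mul_zero, zero_add]; positivity)
    rw [hαv] at this
    norm_num at this

/-! ### Canonical edges in cone coordinates -/

/-- `q` lies in the open cone with apex `p` cut out by the linear functionals `A` and `B`. -/
def InCone (A B : Pt →ₗ[ℝ] ℝ) (p q : Pt) : Prop := A p < A q ∧ B p < B q

/-- `u` is visible in the cone of `x` and no lower visible vertex lies in its subcone, where
height is measured by `A + B`: the condition that `x` adds the edge `xu` towards that cone. -/
def ConeEdge (P : Set Pt) (S : Set (Pt × Pt)) (A B : Pt →ₗ[ℝ] ℝ) (x u : Pt) : Prop :=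
  InCone A B x u ∧ CanSee S x u ∧
    ∀ y ∈ P, InCone A B x y → CanSee S x y → SameSubIn (InCone A B) S x u y →
      A u + B u ≤ A y + B y

/-- Within an open half-plane through the origin, a direction strictly separating two others is
a positive combination of them. -/
lemma exists_pos_comb {L : Pt →ₗ[ℝ] ℝ} {k a b : Pt} (hk : 0 < L k) (ha : 0 < L a) (hb : 0 < L b)
    (h : crossP k a * crossP k b < 0) : ∃ p q : ℝ, 0 < p ∧ 0 < q ∧ k = p • a + q • b := by
  have hid : crossP a b • k = crossP k b • a - crossP k a • b := by
    ext <;> simp [crossP] <;> ring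
  have hL := congrArg L hid
  simp only [map_smul, map_sub, smul_eq_mul] at hL
  have hD : crossP a b ≠ 0 := by
    intro h0
    rw [h0] at hL
    have h1 : crossP k b * (crossP k b * L a) = (crossP k a * crossP k b) * L b := by
      linear_combination (-crossP k b) * hL
    nlinarith [mul_nonneg (sq_nonneg (crossP k b)) ha.le, mul_neg_of_neg_of_pos h hb]
  have hk' : k = (crossP k b / crossP a b) • a + (-crossP k a / crossP a b) • b := by
    have : k = (crossP a b)⁻¹ • (crossP a b • k) := by rw [smul_smul, inv_mul_cancel₀ hD, one_smul]
    rw [hid] at this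
    conv_lhs => rw [this]
    simp only [div_eq_mul_inv]; module
  have hpq : 0 < (crossP k b / crossP a b) * (-crossP k a / crossP a b) := by
    rw [div_mul_div_comm]
    exact div_pos (by linarith) (mul_self_pos.2 hD)
  have hLk := congrArg L hk'
  simp only [map_smul, map_add, smul_eq_mul] at hLk
  rcases mul_pos_iff.1 hpq with ⟨h1, h2⟩ | ⟨h1, h2⟩
  · exact ⟨_, _, h1, h2, hk'⟩
  · nlinarith

lemma cross_comb_neg {a b k : Pt} {p q : ℝ} (hp : 0 < p) (hq : 0 < q) (hD : crossP a b ≠ 0)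
    (hk : k = p • a + q • b) : crossP k a * crossP k b < 0 := by
  have : crossP k a * crossP k b = -(p * q * (crossP a b) ^ 2) := by
    rw [hk]
    simp only [crossP, Prod.fst_add, Prod.snd_add, Prod.smul_fst, Prod.smul_snd, smul_eq_mul]
    ring
  rw [this]
  have : 0 < p * q * (crossP a b) ^ 2 := by positivity
  linarith

/-- The segment from `v` to `u` is not an edge if `v` can look, past a point `r` of that segment,
at a triangle `vry` with `y` in the cone of `v` and below `u`: the first vertex seen in the
triangle would be a better candidate than `u`. -/
lemma ConeEdge.no_triangle {P : Set Pt} {S : Set (Pt × Pt)} (hPfin : P.Finite)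
    (hSP : ∀ c ∈ S, c.1 ∈ P ∧ c.2 ∈ P) (hGP : GenPos P) {A B : Pt →ₗ[ℝ] ℝ} {v u r y : Pt}
    (hE : ConeEdge P S A B v u) {τ : ℝ} (hτ : 0 < τ) (hτ1 : τ ≤ 1) (hr : r - v = τ • (u - v))
    (hv : v ∈ P) (hy : y ∈ P) (hvy : InCone A B v y) (hyu : A y + B y < A u + B u)
    (hD : crossP (r - v) (y - v) ≠ 0)
    (h1 : ∀ e f, Constr S e f → ∀ m ∈ openSegment ℝ e f, 0 ≤ bary v r y m → bary y v r m = 0 →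
      0 < bary r y v m → bary y v r e = 0)
    (h2 : ∀ e f, Constr S e f → ∀ m ∈ openSegment ℝ e f, bary v r y m = 0 → 0 < bary y v r m →
      0 < bary r y v m → bary v r y e = 0)
    (h3 : ∀ f, Constr S r f → ∀ m ∈ openSegment ℝ r f, 0 < bary v r y m → 0 < bary y v r m →
      0 ≤ bary r y v m → False)
    (h4 : ∀ p ∈ P, 0 ≤ bary v r y p → bary y v r p = 0 → 0 < bary r y v p → p = r) :
    False := by
  obtain ⟨z, hzP, hα, hβ, hγ, hsee, hsub⟩ := exists_visible hPfin hSP hGP hv hy hD h1 h2 h3 h4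
  obtain ⟨⟨hA, hB⟩, -, hmin⟩ := hE
  have hs := bary_sum hD z
  have hzv := bary_sub hD z
  rw [hr, smul_smul] at hzv
  have hL : ∀ L : Pt →ₗ[ℝ] ℝ, L z - L v =
      bary r y v z * τ * (L u - L v) + bary y v r z * (L y - L v) := by
    intro L
    have := congrArg L hzv
    simpa using this
  have hzA := hL A
  have hzB := hL B
  have hbt : 0 ≤ bary r y v z * τ := by positivity
  have hA' : A v < A z := by
    nlinarith [mul_nonneg hbt (sub_pos.2 hA).le, mul_pos hγ (sub_pos.2 hvy.1)]
  have hB' : B v < B z := by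
    nlinarith [mul_nonneg hbt (sub_pos.2 hB).le, mul_pos hγ (sub_pos.2 hvy.2)]
  have hle := hmin z hzP ⟨hA', hB'⟩ hsee (by
    intro k hk hkc hneg
    obtain ⟨p, q, hp, hq, hkpq⟩ := exists_pos_comb (L := A) (k := k - v) (a := u - v) (b := z - v)
      (by simpa using hkc.1) (by simpa using hA) (by simpa using hA') hneg
    refine hsub k hk (p / τ) q (by positivity) hq ?_
    rw [hkpq, hr, smul_smul, div_mul_cancel₀ _ hτ.ne'])
  have hbt1 : bary r y v z * τ ≤ bary r y v z := mul_le_of_le_one_right hβ hτ1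
  have hrest : 0 ≤ 1 - bary y v r z - bary r y v z * τ := by linarith
  nlinarith [mul_pos hγ (sub_pos.2 hyu),
    mul_nonneg hrest (by linarith : 0 ≤ A u + B u - (A v + B v))]

lemma mem_openSegment_of_sub {a b m : Pt} {t : ℝ} (ht : 0 < t) (ht1 : t < 1)
    (h : m - a = t • (b - a)) : m ∈ openSegment ℝ a b := by
  refine ⟨1 - t, t, by linarith, ht, by ring, ?_⟩
  rw [← sub_eq_zero] at h ⊢
  rw [← neg_eq_zero, ← h]; module

/-- An edge `vu` is not crossed by a visibility segment `xy` rising into the cone of `x` to a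
vertex `y` below `u`. -/
lemma ConeEdge.no_cross {P : Set Pt} {S : Set (Pt × Pt)} (hPfin : P.Finite)
    (hSP : ∀ c ∈ S, c.1 ∈ P ∧ c.2 ∈ P)
    (hSnc : ∀ c ∈ S, ∀ d ∈ S, c ≠ d → ¬ PCross c.1 c.2 d.1 d.2)
    (hGP : GenPos P) {A B : Pt →ₗ[ℝ] ℝ} {v u x y n : Pt}
    (hE : ConeEdge P S A B v u) (hv : v ∈ P) (hu : u ∈ P) (hy : y ∈ P)
    (hxy : InCone A B x y) (hsee : CanSee S x y) (hyu : A y + B y < A u + B u)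
    (hn : n ∈ openSegment ℝ x y) (hn' : n ∈ openSegment ℝ v u) : False := by
  have hvu : v ≠ u := by rintro rfl; exact lt_irrefl _ hE.1.1
  have hnP : n ∉ P := fun h => hvu (hGP.eq_of_mem h hv hu hn')
  have hn2 := hn
  have hn2' := hn'
  obtain ⟨s, t, hs, ht, hst, hndef⟩ := hn
  obtain ⟨s', t', hs', ht', hst', hndef'⟩ := hn'
  have hL : ∀ L : Pt →ₗ[ℝ] ℝ, L x < L y → L v < L u → L v < L y := by
    intro L h1 h2
    have e1 : s * L x + t * L y = L n := by rw [← hndef]; simp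
    have e2 : s' * L v + t' * L u = L n := by rw [← hndef']; simp
    rw [show s = 1 - t by linarith] at e1 hs
    rw [show s' = 1 - t' by linarith] at e2
    nlinarith [mul_pos hs (sub_pos.2 h1), mul_pos ht' (sub_pos.2 h2)]
  have hvy : InCone A B v y := ⟨hL A hxy.1 hE.1.1, hL B hxy.2 hE.1.2⟩
  have hvy' : v ≠ y := by rintro rfl; exact lt_irrefl _ hvy.1
  have huy : u ≠ y := by rintro rfl; exact lt_irrefl _ hyu
  have hs'e : s' = 1 - t' := by linarith
  have hnv : n - v = t' • (u - v) := by rw [← hndef', hs'e]; module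
  have hD : crossP (n - v) (y - v) ≠ 0 := by
    have : crossP (n - v) (y - v) = t' * crossP (u - v) (y - v) := by
      rw [hnv]; simp only [crossP, Prod.smul_fst, Prod.smul_snd, smul_eq_mul]; ring
    rw [this]
    exact mul_ne_zero ht'.ne' (hGP.cross_ne hv hu hy hvu huy hvy')
  have hseg : ∀ m, 0 ≤ bary v n y m → bary y v n m = 0 → 0 < bary n y v m →
      m ∈ openSegment ℝ v u := by
    intro m hα hγ hβ
    have hm := bary_sub hD m
    have hsum := bary_sum hD m
    rw [hγ, zero_smul, add_zero, hnv, smul_smul] at hm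
    refine mem_openSegment_of_sub (t := bary n y v m * t') (by positivity) ?_ hm
    nlinarith
  refine hE.no_triangle hPfin hSP hGP ht' (by linarith) hnv hv hy hvy hyu hD ?_ ?_ ?_ ?_
  · intro e f hef m hm hα hγ hβ
    have hmu := hseg m hα hγ hβ
    have hu0 : bary y v n u = 0 := by
      unfold bary
      rw [div_eq_zero_iff]; left
      rw [← hndef', hs'e]
      simp only [crossP, Prod.fst_add, Prod.snd_add, Prod.smul_fst, Prod.smul_snd, smul_eq_mul,
        Prod.fst_sub, Prod.snd_sub]
      ring
    rcases hE.2.1.eq_of_cross hSnc hef hm hmu with ⟨rfl, -⟩ | ⟨rfl, -⟩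
    · exact bary_left _ _ _
    · exact hu0
  · intro e f hef m hm hα hγ hβ
    have hsum := bary_sum hD m
    have hmny : m ∈ openSegment ℝ n y := by
      refine ⟨bary n y v m, bary y v n m, hβ, hγ, by linarith, ?_⟩
      conv_rhs => rw [bary_eq hD m, hα, zero_smul, zero_add]
    have hmxy : m ∈ openSegment ℝ x y := by
      rw [openSegment_symm] at hn2 ⊢
      exact openSegment_sub_left hn2 hmny
    have hx0 : bary v n y x = 0 := by
      unfold bary
      rw [div_eq_zero_iff]; left
      obtain rfl : s = 1 - t := by linarith
      rw [← hndef]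
      simp only [crossP, Prod.fst_add, Prod.snd_add, Prod.smul_fst, Prod.smul_snd, smul_eq_mul,
        Prod.fst_sub, Prod.snd_sub]
      ring
    rcases hsee.eq_of_cross hSnc hef hm hmxy with ⟨rfl, -⟩ | ⟨rfl, -⟩
    · exact hx0
    · exact bary_right _ _ _
  · intro f hf
    exact absurd (Constr.mem hSP hf).1 hnP
  · intro p hp hα hγ hβ
    exact absurd (hGP.eq_of_mem hp hv hu (hseg p hα hγ hβ)) hvu

/-- Two vertices `v`, `w` with edges to `u` and not separated by a constraint at `u` are not in
each other's cones. -/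
lemma ConeEdge.not_inCone {P : Set Pt} {S : Set (Pt × Pt)} (hPfin : P.Finite)
    (hSP : ∀ c ∈ S, c.1 ∈ P ∧ c.2 ∈ P)
    (hSnc : ∀ c ∈ S, ∀ d ∈ S, c ≠ d → ¬ PCross c.1 c.2 d.1 d.2)
    (hGP : GenPos P) {A B : Pt →ₗ[ℝ] ℝ} {v u w : Pt}
    (hv : v ∈ P) (hu : u ∈ P) (hw : w ∈ P)
    (hEv : ConeEdge P S A B v u) (hEw : ConeEdge P S A B w u)
    (hD : crossP (v - u) (w - u) ≠ 0)
    (hsep : ∀ k, Constr S u k → ∀ p q : ℝ, 0 < p → 0 < q → k - u = p • (v - u) + q • (w - u) →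
      False) : ¬ InCone A B v w := by
  intro hvw
  have hD' : crossP (u - v) (w - v) ≠ 0 := by
    have : crossP (u - v) (w - v) = -crossP (v - u) (w - u) := by
      simp only [crossP, Prod.fst_sub, Prod.snd_sub]; ring
    rw [this]; exact neg_ne_zero.2 hD
  have hvu : v ≠ u := by rintro rfl; exact lt_irrefl _ hEv.1.1
  have hwu := hEw.1
  refine hEv.no_triangle hPfin hSP hGP one_pos le_rfl (one_smul ℝ _).symm hv hw hvw
    (add_lt_add hwu.1 hwu.2) hD' ?_ ?_ ?_ ?_
  · intro e f hef m hm hα hγ hβ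
    have hsum := bary_sum hD' m
    rcases hα.eq_or_lt with h0 | h0
    · -- here `m = u`, so the constraint is degenerate
      have hmu : m = u := by
        rw [bary_eq hD' m, ← h0, hγ, show bary u w v m = 1 by linarith]; simp
      subst hmu
      have hefm := Constr.mem hSP hef
      obtain rfl := hGP.eq_of_mem hu hefm.1 hefm.2 hm
      rw [openSegment_same] at hm
      obtain rfl : m = e := hm
      exact hγ
    · have hmv : m ∈ openSegment ℝ v u := by
        refine ⟨bary v u w m, bary u w v m, h0, hβ, by linarith, ?_⟩
        conv_rhs => rw [bary_eq hD' m, hγ, zero_smul, add_zero]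
      rcases hEv.2.1.eq_of_cross hSnc hef hm hmv with ⟨rfl, -⟩ | ⟨rfl, -⟩
      · exact bary_left _ _ _
      · exact bary_right _ _ _
  · intro e f hef m hm hα hγ hβ
    have hsum := bary_sum hD' m
    have hmw : m ∈ openSegment ℝ w u := by
      rw [openSegment_symm]
      refine ⟨bary u w v m, bary w v u m, hβ, hγ, by linarith, ?_⟩
      conv_rhs => rw [bary_eq hD' m, hα, zero_smul, zero_add]
    rcases hEw.2.1.eq_of_cross hSnc hef hm hmw with ⟨rfl, -⟩ | ⟨rfl, -⟩
    · exact bary_right _ _ _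
    · exact bary_left _ _ _
  · intro f hf m hm hα hγ hβ
    obtain ⟨s, t, hs, ht, hst, hmdef⟩ := hm
    have h := bary_sub hD m
    rw [bary_swap v w u m, bary_swap w u v m] at h
    have hf' : f - u = t⁻¹ • (m - u) := by
      rw [← hmdef, show s = 1 - t by linarith,
        show (1 - t) • u + t • f - u = t • (f - u) by module, smul_smul, inv_mul_cancel₀ ht.ne',
        one_smul]
    refine hsep f hf (t⁻¹ * bary v u w m) (t⁻¹ * bary w v u m) (by positivity) (by positivity) ?_
    rw [hf', h]; module
  · intro p hp hα hγ hβ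
    by_contra hpu
    have hpv : p ≠ v := by
      rintro rfl; rw [bary_right] at hβ; exact lt_irrefl _ hβ
    have hD3 : crossP (v - w) (u - w) ≠ 0 := by rwa [crossP_cyc, crossP_cyc]
    exact hGP.bary_ne hD3 hp hv hu hpv hpu hγ

/-! ### The triangle of two consecutive canonical vertices -/

/-- A segment starting in the interior of the triangle `uvw` and not approaching the side `vw`
leaves the triangle, if at all, through `u` or one of the sides `uv`, `uw`. -/
lemma exists_exit {u v w m e : Pt} (hD : crossP (v - u) (w - u) ≠ 0)
    (hα : 0 < bary u v w m) (hβ : 0 < bary v w u m) (hγ : 0 < bary w u v m)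
    (he : bary u v w m ≤ bary u v w e) (hout : bary v w u e < 0 ∨ bary w u v e < 0) :
    ∃ n ∈ openSegment ℝ m e, n = u ∨ n ∈ openSegment ℝ v u ∨ n ∈ openSegment ℝ w u := by
  obtain ⟨s, t, hs, ht, hst, hcase⟩ := exists_first_zero hβ hγ hout
  rw [← bary_comb _ _ _ _ _ hst, ← bary_comb _ _ _ _ _ hst] at hcase
  have hαn : 0 < bary u v w (s • m + t • e) := by
    rw [bary_comb _ _ _ _ _ hst]
    have : 0 < bary u v w e := hα.trans_le he
    positivity
  refine ⟨s • m + t • e, ⟨s, t, hs, ht, hst, rfl⟩, ?_⟩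
  generalize s • m + t • e = n at hcase hαn
  have hsum := bary_sum hD n
  have hn := bary_eq hD n
  rcases hcase with ⟨h0, h1⟩ | ⟨h0, h1⟩
  · rcases h1.eq_or_lt with h2 | h2
    · left; rw [hn, h0, ← h2, show bary u v w n = 1 by linarith]; simp
    · right; right
      refine ⟨_, _, h2, hαn, by linarith, ?_⟩
      conv_rhs => rw [hn, h0]
      module
  · rcases h1.eq_or_lt with h2 | h2
    · left; rw [hn, h0, ← h2, show bary u v w n = 1 by linarith]; simp
    · right; left
      refine ⟨_, _, h2, hαn, by linarith, ?_⟩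
      conv_rhs => rw [hn, h0]
      module

/-- A constraint through the interior of the triangle `uvw` cannot leave it through the visible
sides `uv`, `uw`; so its end farther from the line `vw` stays in the triangle. -/
lemma constr_end_mem {P : Set Pt} {S : Set (Pt × Pt)} (hSP : ∀ c ∈ S, c.1 ∈ P ∧ c.2 ∈ P)
    (hSnc : ∀ c ∈ S, ∀ d ∈ S, c ≠ d → ¬ PCross c.1 c.2 d.1 d.2)
    (hGP : GenPos P) {u v w e f m : Pt} (hu : u ∈ P) (hsv : CanSee S v u) (hsw : CanSee S w u)
    (hD : crossP (v - u) (w - u) ≠ 0) (hef : Constr S e f) (hm : m ∈ openSegment ℝ e f)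
    (hα : 0 < bary u v w m) (hβ : 0 < bary v w u m) (hγ : 0 < bary w u v m)
    (he : bary u v w m ≤ bary u v w e) : 0 ≤ bary v w u e ∧ 0 ≤ bary w u v e := by
  by_contra hc
  have hout : bary v w u e < 0 ∨ bary w u v e < 0 := by
    by_contra! h; exact hc h
  obtain ⟨n, hn, hcase⟩ := exists_exit hD hα hβ hγ he hout
  have hn' := openSegment_sub_left hm hn
  obtain ⟨s, t, hs, ht, hst, hmdef⟩ := hm
  rcases hcase with rfl | h | h
  · have hefm := Constr.mem hSP hef
    obtain rfl := hGP.eq_of_mem hu hefm.1 hefm.2 hn'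
    rw [← add_smul, hst, one_smul] at hmdef
    rw [← hmdef] at hβ hγ
    rcases hout with h | h <;> linarith
  · have h0 : bary w u v m = 0 := by
      rw [← hmdef, bary_comb _ _ _ _ _ hst]
      rcases hsv.eq_of_cross hSnc hef hn' h with ⟨rfl, rfl⟩ | ⟨rfl, rfl⟩ <;>
        rw [bary_left, bary_right] <;> ring
    linarith
  · have h0 : bary v w u m = 0 := by
      rw [← hmdef, bary_comb _ _ _ _ _ hst]
      rcases hsw.eq_of_cross hSnc hef hn' h with ⟨rfl, rfl⟩ | ⟨rfl, rfl⟩ <;>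
        rw [bary_left, bary_right] <;> ring
    linarith

/-- One end of a segment is at least as large, for a barycentric coordinate, as a given point of
the segment. -/
lemma exists_end_ge {a b c e f m : Pt} (hm : m ∈ openSegment ℝ e f) :
    bary a b c m ≤ bary a b c e ∨ bary a b c m ≤ bary a b c f := by
  obtain ⟨s, t, hs, ht, hst, rfl⟩ := hm
  rw [bary_comb _ _ _ _ _ hst]
  obtain rfl : s = 1 - t := by linarith
  by_contra! h
  nlinarith

/-- If `u` is above `v` and `w` for both functionals and neither of `v`, `w` is in the cone of the
other, then moving up in the cone means moving away from the line `vw`. -/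
lemma InCone.bary_lt {A B : Pt →ₗ[ℝ] ℝ} {u v w x y : Pt} (hD : crossP (v - u) (w - u) ≠ 0)
    (hv : InCone A B v u) (hw : InCone A B w u) (hvw : ¬ InCone A B v w)
    (hwv : ¬ InCone A B w v) (hxy : InCone A B x y) : bary u v w x < bary u v w y := by
  have hx := bary_sum hD x
  have hy := bary_sum hD y
  have hL : ∀ L : Pt →ₗ[ℝ] ℝ, L y - L x =
      (bary v w u x - bary v w u y) * (L u - L v) + (bary w u v x - bary w u v y) * (L u - L w) := by
    intro L
    rw [bary_lin hD L x, bary_lin hD L y]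
    linear_combination L u * hy - L u * hx
  have hA := hL A
  have hB := hL B
  obtain ⟨hv1, hv2⟩ := hv
  obtain ⟨hw1, hw2⟩ := hw
  obtain ⟨hxy1, hxy2⟩ := hxy
  suffices h : 0 < (bary v w u x - bary v w u y) + (bary w u v x - bary w u v y) by linarith
  rw [← sub_pos] at hv1 hv2 hw1 hw2 hxy1 hxy2
  rw [hA] at hxy1
  rw [hB] at hxy2
  have h1 : ¬ (A u - A w < A u - A v ∧ B u - B w < B u - B v) := fun h =>
    hvw ⟨by linarith [h.1], by linarith [h.2]⟩
  have h2 : ¬ (A u - A v < A u - A w ∧ B u - B v < B u - B w) := fun h =>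
    hwv ⟨by linarith [h.1], by linarith [h.2]⟩
  generalize bary v w u x - bary v w u y = p at *
  generalize bary w u v x - bary w u v y = q at *
  generalize A u - A v = a1 at *
  generalize A u - A w = a2 at *
  generalize B u - B v = b1 at *
  generalize B u - B w = b2 at *
  clear hA hB hL hx hy
  by_contra! hpq
  rcases le_total 0 p with hp | hp
  · -- `q ≤ -p ≤ 0`, so `a2 < a1` and `b2 < b1`
    exact h1 ⟨by nlinarith, by nlinarith⟩
  · rcases le_total 0 q with hq | hq
    · exact h2 ⟨by nlinarith, by nlinarith⟩
    · nlinarith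

section Core

variable {P : Set Pt} {S : Set (Pt × Pt)} (hPfin : P.Finite)
  (hSP : ∀ c ∈ S, c.1 ∈ P ∧ c.2 ∈ P)
  (hSnc : ∀ c ∈ S, ∀ d ∈ S, c ≠ d → ¬ PCross c.1 c.2 d.1 d.2)
  (hGP : GenPos P) {A B : Pt →ₗ[ℝ] ℝ} {u v w : Pt}
  (hu : u ∈ P) (hv : v ∈ P) (hw : w ∈ P)
  (hEv : ConeEdge P S A B v u) (hEw : ConeEdge P S A B w u)
  (hD : crossP (v - u) (w - u) ≠ 0)
  (hsep : ∀ k, Constr S u k → ∀ p q : ℝ, 0 < p → 0 < q → k - u = p • (v - u) + q • (w - u) →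
    False)
  (hcons : ∀ x ∈ P, ConeEdge P S A B x u → ∀ p q : ℝ, 0 < p → 0 < q →
    x - u = p • (v - u) + q • (w - u) → False)

include hPfin hSP hSnc hGP hu hv hw hEv hEw hD hsep hcons

/-- The triangle of consecutive canonical vertices contains no vertex besides its corners: the
one farthest from `vw` would have an edge to `u`, contradicting consecutiveness. -/
lemma triangle_vertex {p : Pt} (hp : p ∈ P) (hα : 0 ≤ bary u v w p) (hβ : 0 ≤ bary v w u p)
    (hγ : 0 ≤ bary w u v p) : p = u ∨ p = v ∨ p = w := by
  by_contra! hne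
  have hD2 : crossP (w - v) (u - v) ≠ 0 := by rwa [crossP_cyc]
  have hD3 : crossP (u - w) (v - w) ≠ 0 := by rwa [crossP_cyc]
  have hfin : {p | p ∈ P ∧ 0 ≤ bary u v w p ∧ 0 ≤ bary v w u p ∧ 0 ≤ bary w u v p ∧
      p ≠ u ∧ p ≠ v ∧ p ≠ w}.Finite := hPfin.subset fun p hp => hp.1
  obtain ⟨x, ⟨hxP, hxα, hxβ, hxγ, hxu, hxv, hxw⟩, hxmax⟩ :=
    Set.exists_max_image _ (bary u v w) hfin ⟨p, hp, hα, hβ, hγ, hne⟩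
  have hxα : 0 < bary u v w x := hxα.lt_of_ne' (hGP.bary_ne hD hxP hv hw hxv hxw)
  have hxβ : 0 < bary v w u x := hxβ.lt_of_ne' (hGP.bary_ne hD2 hxP hw hu hxw hxu)
  have hxγ : 0 < bary w u v x := hxγ.lt_of_ne' (hGP.bary_ne hD3 hxP hu hv hxu hxv)
  have hxs := bary_sum hD x
  have htop : ∀ y ∈ P, bary u v w x < bary u v w y → 0 ≤ bary v w u y → 0 ≤ bary w u v y →
      y = u := by
    intro y hy h1 h2 h3
    by_contra hyu
    refine h1.not_ge (hxmax y ⟨hy, (hxα.trans h1).le, h2, h3, hyu, ?_, ?_⟩)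
    · rintro rfl; rw [bary_left] at h1; linarith
    · rintro rfl; rw [bary_right] at h1; linarith
  have hxL : ∀ L : Pt →ₗ[ℝ] ℝ, L v < L u → L w < L u → L x < L u := by
    intro L h1 h2
    rw [bary_lin hD L x, show bary u v w x = 1 - bary v w u x - bary w u v x by linarith]
    nlinarith [mul_pos hxβ (sub_pos.2 h1), mul_pos hxγ (sub_pos.2 h2)]
  have hxcone : InCone A B x u := ⟨hxL A hEv.1.1 hEw.1.1, hxL B hEv.1.2 hEw.1.2⟩
  refine hcons x hxP ⟨hxcone, ?_, ?_⟩ _ _ hxβ hxγ (bary_sub hD x)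
  · -- a constraint crossing `xu` has an endpoint in the triangle farther from `vw` than `x`
    have key : ∀ e f, Constr S e f → ∀ m ∈ openSegment ℝ e f, m ∈ openSegment ℝ x u →
        bary u v w m ≤ bary u v w e → Constr S x u := by
      intro e f hef m hm hmx he
      have hefm := Constr.mem hSP hef
      obtain ⟨s, t, hs, ht, hst, hmdef⟩ := hmx
      have hmα : bary u v w m = s * bary u v w x + t := by
        rw [← hmdef, bary_comb _ _ _ _ _ hst, bary_self hD, mul_one]
      have hmα' : bary u v w x < bary u v w m := by
        rw [hmα, show t = 1 - s by linarith]; nlinarith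
      have hmβ : 0 < bary v w u m := by
        rw [← hmdef, bary_comb _ _ _ _ _ hst, bary_right]; simp only [mul_zero, add_zero]; positivity
      have hmγ : 0 < bary w u v m := by
        rw [← hmdef, bary_comb _ _ _ _ _ hst, bary_left]; simp only [mul_zero, add_zero]; positivity
      have hin := constr_end_mem hSP hSnc hGP hu hEv.2.1 hEw.2.1 hD hef hm
        (hxα.trans hmα') hmβ hmγ he
      obtain rfl := htop e hefm.1 (hmα'.trans_le he) hin.1 hin.2
      by_cases hfx : f = x
      · subst hfx; exact hef.symm
      exfalso
      by_cases hfe : f = e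
      · subst hfe
        rw [openSegment_same] at hm
        obtain rfl : m = f := hm
        rw [bary_right] at hmβ; exact lt_irrefl _ hmβ
      refine hGP.cross_ne hu hxP hefm.2 (Ne.symm hxu) (Ne.symm hfx) (Ne.symm hfe) ?_
      obtain ⟨s', t', hs', ht', hst', hmdef'⟩ := hm
      obtain rfl : s' = 1 - t' := by linarith
      obtain rfl : t = 1 - s := by linarith
      have hvec : s • (x - e) = t' • (f - e) := by
        rw [← sub_eq_zero] at hmdef'
        rw [← sub_eq_zero, ← neg_eq_zero, ← hmdef', ← hmdef]; module
      have : (s * t') * crossP (x - e) (f - e) = 0 := by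
        have : (s * t') * crossP (x - e) (f - e) = crossP (s • (x - e)) (t' • (f - e)) := by
          simp only [crossP, Prod.smul_fst, Prod.smul_snd, smul_eq_mul]; ring
        rw [this, hvec]; simp only [crossP]; ring
      exact (mul_eq_zero.1 this).resolve_left (by positivity)
    refine CanSee.of_forall fun e f hef m hm hmx => ?_
    rcases exists_end_ge (a := u) (b := v) (c := w) hm with h | h
    · exact key e f hef m hm hmx h
    · exact key f e hef.symm m (by rwa [openSegment_symm]) hmx h
  · -- a lower visible vertex in the cone of `x` is outside the triangle, so that its segment
    -- to `x` crosses one of the edges `vu`, `wu`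
    intro y hy hxy hsee _
    by_contra! hlow
    have hvw := hEv.not_inCone hPfin hSP hSnc hGP hv hu hw hEw hD hsep
    have hwv := hEw.not_inCone hPfin hSP hSnc hGP hw hu hv hEv
      (by
        have : crossP (w - u) (v - u) = -crossP (v - u) (w - u) := by simp only [crossP]; ring
        rw [this]; exact neg_ne_zero.2 hD)
      (fun k hk p q hp hq h => hsep k hk q p hq hp (by rw [h, add_comm]))
    have hup := InCone.bary_lt hD hEv.1 hEw.1 hvw hwv hxy
    have hout : bary v w u y < 0 ∨ bary w u v y < 0 := by
      by_contra! h
      obtain rfl := htop y hy hup h.1 h.2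
      exact lt_irrefl _ hlow
    obtain ⟨n, hn, hcase⟩ := exists_exit hD hxα hxβ hxγ hup.le hout
    rcases hcase with rfl | h | h
    · obtain rfl := hGP.eq_of_mem hu hxP hy hn
      exact lt_irrefl _ hxy.1
    · exact hEv.no_cross hPfin hSP hSnc hGP hv hu hy hxy hsee hlow hn h
    · exact hEw.no_cross hPfin hSP hSnc hGP hw hu hy hxy hsee hlow hn h

/-- No constraint meets the interior of the triangle of consecutive canonical vertices: it would
have to end at `u` and separate `v` from `w`. -/
lemma triangle_constr {e f m : Pt} (hef : Constr S e f) (hm : m ∈ openSegment ℝ e f)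
    (hα : 0 < bary u v w m) (hβ : 0 < bary v w u m) (hγ : 0 < bary w u v m) : False := by
  have key : ∀ e f, Constr S e f → m ∈ openSegment ℝ e f → bary u v w m ≤ bary u v w e →
      False := by
    intro e f hef hm he
    have hin := constr_end_mem hSP hSnc hGP hu hEv.2.1 hEw.2.1 hD hef hm hα hβ hγ he
    have he0 := hα.trans_le he
    rcases triangle_vertex hPfin hSP hSnc hGP hu hv hw hEv hEw hD hsep hcons
      (Constr.mem hSP hef).1 he0.le hin.1 hin.2 with rfl | rfl | rfl
    · obtain ⟨s, t, hs, ht, hst, hmdef⟩ := hm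
      have hf' : f - e = t⁻¹ • (m - e) := by
        rw [← hmdef, show s = 1 - t by linarith,
          show (1 - t) • e + t • f - e = t • (f - e) by module, smul_smul, inv_mul_cancel₀ ht.ne',
          one_smul]
      refine hsep f hef (t⁻¹ * bary v w e m) (t⁻¹ * bary w e v m) (by positivity)
        (by positivity) ?_
      rw [hf', bary_sub hD m]; module
    · rw [bary_left] at he0; exact lt_irrefl _ he0
    · rw [bary_right] at he0; exact lt_irrefl _ he0
  rcases exists_end_ge (a := u) (b := v) (c := w) hm with h | h
  · exact key e f hef hm h
  · exact key f e hef.symm (by rwa [openSegment_symm]) h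

end Core

/-- Points of the interior of a triangle have positive barycentric coordinates. -/
lemma bary_pos_of_mem_interior {a b c p : Pt} (hD : crossP (b - a) (c - a) ≠ 0)
    (hp : p ∈ interior (convexHull ℝ ({a, b, c} : Set Pt))) : 0 < bary a b c p := by
  have hsub : ∀ q ∈ convexHull ℝ ({a, b, c} : Set Pt), 0 ≤ bary a b c q := by
    refine convexHull_min (t := {q | 0 ≤ bary a b c q}) ?_ ?_
    · rintro q (rfl | rfl | rfl)
      · simp only [mem_ofPred_eq]; rw [bary_self hD]; norm_num
      · exact (bary_left _ _ _).ge
      · exact (bary_right _ _ _).ge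
    · intro x hx y hy s t hs ht hst
      simp only [mem_ofPred_eq] at *
      rw [bary_comb _ _ _ _ _ hst]; positivity
  -- otherwise move from `p` slightly away from `a`
  by_contra! hneg
  have hcont : Filter.Tendsto (fun ε : ℝ => (1 + ε) • p + (-ε) • a) (nhdsWithin 0 (Ioi 0))
      (nhds p) := by
    have : Continuous (fun ε : ℝ => (1 + ε) • p + (-ε) • a) := by fun_prop
    have h := this.tendsto 0
    simp only [add_zero, one_smul, neg_zero, zero_smul] at h
    exact h.mono_left nhdsWithin_le_nhds
  have hev := hcont.eventually (mem_interior_iff_mem_nhds.1 hp)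
  obtain ⟨ε, hε, hε0⟩ := (hev.and self_mem_nhdsWithin).exists
  have hε0 : 0 < ε := hε0
  have := hsub _ hε
  rw [bary_comb _ _ _ _ _ (by ring), bary_self hD] at this
  nlinarith

/-! ### The three cones -/

/-- The functional vanishing on the right boundary ray of the positive cone `Cᵢ` of the origin. -/
def cA (i : ℕ) : Pt →ₗ[ℝ] ℝ where
  toFun p := (rel i 0 p).2 - Real.sqrt 3 * (rel i 0 p).1
  map_add' p q := by simp [rel, rot]; ring
  map_smul' k p := by simp [rel, rot]; ring

/-- The functional vanishing on the left boundary ray of the positive cone `Cᵢ` of the origin. -/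
def cB (i : ℕ) : Pt →ₗ[ℝ] ℝ where
  toFun p := (rel i 0 p).2 + Real.sqrt 3 * (rel i 0 p).1
  map_add' p q := by simp [rel, rot]; ring
  map_smul' k p := by simp [rel, rot]; ring

lemma inPos_iff (i : ℕ) (u p : Pt) : inPos i u p ↔ InCone (cA i) (cB i) u p := by
  have h1 : cA i p - cA i u = (rel i u p).2 - Real.sqrt 3 * (rel i u p).1 := by
    rw [← map_sub]; simp [cA, rel]
  have h2 : cB i p - cB i u = (rel i u p).2 + Real.sqrt 3 * (rel i u p).1 := by
    rw [← map_sub]; simp [cB, rel]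
  unfold inPos InCone
  rw [← sub_pos (b := cA i u), ← sub_pos (b := cB i u), h1, h2, ← abs_of_nonneg (Real.sqrt_nonneg 3),
    ← abs_mul, abs_of_nonneg (Real.sqrt_nonneg 3), abs_lt]
  constructor
  · rintro ⟨h, h'⟩; exact ⟨by linarith, by linarith⟩
  · rintro ⟨h, h'⟩; exact ⟨by linarith, by linarith⟩

lemma projLen_eq (i : ℕ) (u p : Pt) :
    projLen i u p = ((cA i p + cB i p) - (cA i u + cB i u)) / 2 := by
  have : cA i p + cB i p - (cA i u + cB i u) = cA i (p - u) + cB i (p - u) := by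
    rw [map_sub, map_sub]; ring
  rw [this]; simp [cA, cB, rel, projLen]

/-- The six boundary functionals take only the values `s`, `t`, `-(s + t)` at each point, which
makes the six cones disjoint. -/
lemma cone_values (p : Pt) : ∃ s t : ℝ, cA 0 p = s ∧ cB 0 p = t ∧ cA 1 p = -(s + t) ∧
    cB 1 p = s ∧ cA 2 p = t ∧ cB 2 p = -(s + t) := by
  have h3 : Real.sqrt 3 * Real.sqrt 3 = 3 := Real.mul_self_sqrt (by norm_num)
  have c1 : Real.cos (2 * Real.pi / 3) = -(1 / 2) := by
    rw [show 2 * Real.pi / 3 = Real.pi - Real.pi / 3 by ring, Real.cos_pi_sub, Real.cos_pi_div_three]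
  have s1 : Real.sin (2 * Real.pi / 3) = Real.sqrt 3 / 2 := by
    rw [show 2 * Real.pi / 3 = Real.pi - Real.pi / 3 by ring, Real.sin_pi_sub, Real.sin_pi_div_three]
  have c2 : Real.cos (2 * Real.pi * 2 / 3) = -(1 / 2) := by
    rw [show 2 * Real.pi * 2 / 3 = Real.pi / 3 + Real.pi by ring, Real.cos_add_pi,
      Real.cos_pi_div_three]
  have s2 : Real.sin (2 * Real.pi * 2 / 3) = -(Real.sqrt 3 / 2) := by
    rw [show 2 * Real.pi * 2 / 3 = Real.pi / 3 + Real.pi by ring, Real.sin_add_pi,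
      Real.sin_pi_div_three]
  refine ⟨p.2 - Real.sqrt 3 * p.1, p.2 + Real.sqrt 3 * p.1, ?_, ?_, ?_, ?_, ?_, ?_⟩ <;>
    simp only [cA, cB, rel, rot, LinearMap.coe_mk, AddHom.coe_mk, sub_zero, Nat.cast_zero,
      Nat.cast_one, Nat.cast_ofNat, mul_zero, zero_div, neg_zero, Real.cos_zero, Real.sin_zero,
      mul_one, Real.cos_neg, Real.sin_neg, c1, s1, c2, s2] <;>
    linarith [congrArg (· * p.1) h3, congrArg (· * p.2) h3,
      mul_assoc (Real.sqrt 3) (Real.sqrt 3) p.1, mul_assoc (Real.sqrt 3) (Real.sqrt 3) p.2]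

lemma cone_disjoint {i j : ℕ} (hi : i < 3) (hj : j < 3) {x u : Pt} (h : inPos i x u) :
    (inPos j x u → j = i) ∧ ¬ inPos j u x := by
  rw [inPos_iff] at h
  rw [inPos_iff, inPos_iff]
  obtain ⟨s, t, a1, a2, a3, a4, a5, a6⟩ := cone_values x
  obtain ⟨s', t', b1, b2, b3, b4, b5, b6⟩ := cone_values u
  unfold InCone at *
  interval_cases i <;> interval_cases j <;>
    simp only [a1, a2, a3, a4, a5, a6, b1, b2, b3, b4, b5, b6] at * <;>
    constructor <;> first
      | (intro _; trivial)
      | (rintro ⟨h1, h2⟩; exfalso; linarith [h.1, h.2])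

/-- The vertices of the canonical sequence of `u` in the negative cone `C̄ᵘᵢ` are those which add
an edge to `u` in their positive cone `Cᵢ`. -/
lemma canonVert_iff {P : Set Pt} {S : Set (Pt × Pt)} {i : ℕ} (hi : i < 3) {u x : Pt} (hu : u ∈ P) :
    CanonVert P S i u x ↔ x ∈ P ∧ ConeEdge P S (cA i) (cB i) x u := by
  have hcone : InCone (cA i) (cB i) = inPos i := by
    funext p q; exact propext (inPos_iff i p q).symm
  unfold CanonVert inNeg ConeEdge
  rw [hcone]
  constructor
  · rintro ⟨hx, hE, hin⟩
    refine ⟨hx, hin, ?_⟩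
    rcases hE with ⟨-, -, j, hj, hpos, -⟩ | ⟨-, -, j, hj, hpos, hsee, hmin⟩
    · exact absurd hpos (cone_disjoint hi hj hin).2
    · obtain rfl := (cone_disjoint hi hj hin).1 hpos
      refine ⟨hsee, fun y hy hxy hs hsub => ?_⟩
      have := hmin y hy (by rintro rfl; exact lt_irrefl _ ((inPos_iff _ _ _).1 hxy).1) hxy hs hsub
      rw [projLen_eq, projLen_eq] at this
      linarith
  · rintro ⟨hx, hin, hsee, hmin⟩
    refine ⟨hx, Or.inr ⟨hx, hu, i, hi, hin, hsee, fun y hy _ hxy hs hsub => ?_⟩, hin⟩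
    have := hmin y hy hxy hs hsub
    rw [projLen_eq, projLen_eq]
    linarith

lemma triangle_of_consecCanon (P : Set Pt) (S : Set (Pt × Pt)) (hPfin : P.Finite)
    (hSP : ∀ c ∈ S, c.1 ∈ P ∧ c.2 ∈ P)
    (hSnc : ∀ c ∈ S, ∀ d ∈ S, c ≠ d → ¬ PCross c.1 c.2 d.1 d.2)
    (hGP : GenPos P)
    (u v w : Pt) (i : ℕ) (hi : i < 3) (hcc : ConsecCanon P S i u v w) :
    (∀ p ∈ P, p ∉ interior (convexHull ℝ ({u, v, w} : Set Pt))) ∧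
    (∀ c ∈ S, openSegment ℝ c.1 c.2 ∩ interior (convexHull ℝ ({u, v, w} : Set Pt)) = ∅) := by
  obtain ⟨hcv, hcw, hsub, hpos, hcons⟩ := hcc
  have hu : u ∈ P := by
    rcases hcv.2.1 with h | h
    · exact h.1
    · exact h.2.1
  obtain ⟨hv, hEv⟩ := (canonVert_iff hi hu).1 hcv
  obtain ⟨hw, hEw⟩ := (canonVert_iff hi hu).1 hcw
  have hD : crossP (v - u) (w - u) ≠ 0 := hpos.ne'
  have hD2 : crossP (w - v) (u - v) ≠ 0 := by rwa [crossP_cyc]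
  have hD3 : crossP (u - w) (v - w) ≠ 0 := by rwa [crossP_cyc]
  have hneg : ∀ (k : Pt) (p q : ℝ), 0 < p → 0 < q → k - u = p • (v - u) + q • (w - u) → inNeg i u k := by
    intro k p q hp hq hk
    have hL : ∀ L : Pt →ₗ[ℝ] ℝ, L v < L u → L w < L u → L k < L u := by
      intro L h1 h2
      have := congrArg L hk
      simp only [map_sub, map_add, map_smul, smul_eq_mul] at this
      nlinarith [mul_pos hp (sub_pos.2 h1), mul_pos hq (sub_pos.2 h2)]
    exact (inPos_iff i k u).2 ⟨hL _ hEv.1.1 hEw.1.1, hL _ hEv.1.2 hEw.1.2⟩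
  have hsep : ∀ k, Constr S u k → ∀ p q : ℝ, 0 < p → 0 < q →
      k - u = p • (v - u) + q • (w - u) → False := fun k hk p q hp hq h =>
    hsub k hk (hneg k p q hp hq h) (cross_comb_neg hp hq hD h)
  have hcons' : ∀ x ∈ P, ConeEdge P S (cA i) (cB i) x u → ∀ p q : ℝ, 0 < p → 0 < q →
      x - u = p • (v - u) + q • (w - u) → False := by
    intro x hx hE p q hp hq h
    refine hcons x hx ((canonVert_iff hi hu).2 ⟨hx, hE⟩) ?_ ⟨?_, ?_⟩
    · -- a constraint separating `v` from `x` also separates `v` from `w`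
      intro k hk hkc hlt
      refine hsub k hk hkc ?_
      have e1 : crossP (k - u) (x - u) =
          p * crossP (k - u) (v - u) + q * crossP (k - u) (w - u) := by
        rw [h]; simp only [crossP, Prod.fst_add, Prod.snd_add, Prod.smul_fst, Prod.smul_snd,
          smul_eq_mul]; ring
      rw [e1] at hlt
      generalize crossP (k - u) (v - u) = M at *
      generalize crossP (k - u) (w - u) = N at *
      by_contra! hc
      nlinarith [mul_nonneg hp.le (mul_self_nonneg M), mul_nonneg hq.le hc]
    · have : crossP (v - u) (x - u) = q * crossP (v - u) (w - u) := by
        rw [h]; simp only [crossP, Prod.fst_add, Prod.snd_add, Prod.smul_fst, Prod.smul_snd,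
          smul_eq_mul]; ring
      rw [this]; exact mul_pos hq hpos
    · have : crossP (x - u) (w - u) = p * crossP (v - u) (w - u) := by
        rw [h]; simp only [crossP, Prod.fst_add, Prod.snd_add, Prod.smul_fst, Prod.smul_snd,
          smul_eq_mul]; ring
      rw [this]; exact mul_pos hp hpos
  have hint : ∀ p ∈ interior (convexHull ℝ ({u, v, w} : Set Pt)),
      0 < bary u v w p ∧ 0 < bary v w u p ∧ 0 < bary w u v p := by
    intro p hp
    have r1 : ({u, v, w} : Set Pt) = {v, w, u} := by ext; simp; tauto
    have r2 : ({u, v, w} : Set Pt) = {w, u, v} := by ext; simp; tauto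
    exact ⟨bary_pos_of_mem_interior hD hp, bary_pos_of_mem_interior hD2 (r1 ▸ hp),
      bary_pos_of_mem_interior hD3 (r2 ▸ hp)⟩
  constructor
  · intro p hp hpi
    obtain ⟨h1, h2, h3⟩ := hint p hpi
    rcases triangle_vertex hPfin hSP hSnc hGP hu hv hw hEv hEw hD hsep hcons' hp h1.le h2.le h3.le
      with rfl | rfl | rfl
    · rw [bary_right] at h2; exact lt_irrefl _ h2
    · rw [bary_left] at h1; exact lt_irrefl _ h1
    · rw [bary_right] at h1; exact lt_irrefl _ h1
  · intro c hc
    rw [Set.eq_empty_iff_forall_notMem]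
    rintro m ⟨hm, hmi⟩
    obtain ⟨h1, h2, h3⟩ := hint m hmi
    exact triangle_constr hPfin hSP hSnc hGP hu hv hw hEv hEw hD hsep hcons' (Or.inl hc) hm h1 h2 h3

/-- **Corollary 3.** If `v` and `w` are consecutive vertices along a canonical path of `u`
in a negative cone of `u`, then the triangle `uvw` contains no vertex of `P` in its
interior and no constraint intersects its interior. -/
theorem stmt_13 (P : Set Pt) (S : Set (Pt × Pt)) (hPfin : P.Finite)
    (hSP : ∀ c ∈ S, c.1 ∈ P ∧ c.2 ∈ P)
    (hSnc : ∀ c ∈ S, ∀ d ∈ S, c ≠ d → ¬ PCross c.1 c.2 d.1 d.2)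
    (hGP : GenPos P)
    (u v w : Pt) (i : ℕ) (hi : i < 3)
    (hcc : ConsecCanon P S i u v w ∨ ConsecCanon P S i u w v) :
    (∀ p ∈ P, p ∉ interior (convexHull ℝ ({u, v, w} : Set Pt))) ∧
    (∀ c ∈ S, openSegment ℝ c.1 c.2 ∩ interior (convexHull ℝ ({u, v, w} : Set Pt)) = ∅) := by
  rcases hcc with h | h
  · exact triangle_of_consecCanon P S hPfin hSP hSnc hGP u v w i hi h
  · rw [show ({u, v, w} : Set Pt) = {u, w, v} by rw [Set.pair_comm]]
    exact triangle_of_consecCanon P S hPfin hSP hSnc hGP u w v i hi h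

end CHT6
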